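/- arXiv:2601.01137 — 6 statements merged into one kernel-verified Lean document; each statement's English description precedes it below -/
import Mathlib

section
/- Let N ≥ 1, let a, b be polynomials over F₂ = ZMod 2 of degree < N with coefficient vectors va, vb ∈ (ZMod 2)^N, let A = circulant va and B = circulant vb, and let g = gcd(gcd(a,b), X^N − 1) in (ZMod 2)[X]. Then the rank over F₂ of the N×2N block matrix H_X = [A B] equals N − deg g. -/
open Matrix Polynomial

/-- The polynomial `∑ i, vᵢ Xⁱ` associated with a coefficient vector `v ∈ (ZMod 2)^N`. -/
noncomputable def polyOfVec {N : ℕ} (v : Fin N → ZMod 2) : Polynomial (ZMod 2) :=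
  ∑ i : Fin N, Polynomial.C (v i) * Polynomial.X ^ (i : ℕ)

/-!
The monomial basis identifies `K^N` with the ring `K[X] / (X^N - 1)`, and under this identification
`circulant v` acts as multiplication by the class of `v(X)`. The column space of
`[circulant v, circulant w]` is therefore the ideal generated by the classes of `v(X)` and `w(X)`.
Since `K[X]` is a principal ideal domain, the quotient by this ideal is `K[X] / (g)` with
`g = gcd(v(X), w(X), X^N - 1)`, so the column space has codimension `deg g`.
-/

theorem range_mulVecLin_fromCols {R m n₁ n₂ : Type*} [CommSemiring R] [Fintype n₁] [Fintype n₂]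
    (A : Matrix m n₁ R) (B : Matrix m n₂ R) :
    (fromCols A B).mulVecLin.range = A.mulVecLin.range ⊔ B.mulVecLin.range := by
  have range_col : Set.range (fromCols A B).col = Set.range A.col ∪ Set.range B.col := by
    rw [← Set.Sum.elim_range]
    congr 1
    ext (_ | _) <;> rfl
  simp only [range_mulVecLin, range_col, Submodule.span_union]

theorem pow_val_add_of_pow_eq_one {M : Type*} [Monoid M] {N : ℕ} {x : M} (hx : x ^ N = 1)
    (i j : Fin N) : x ^ (i + j : Fin N).val = x ^ i.val * x ^ j.val := by
  rw [Fin.val_add, ← pow_eq_pow_mod _ hx, pow_add]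

theorem sum_circulant_mulVec_smul_pow {R S : Type*} [CommSemiring R] [Semiring S] [Algebra R S]
    {N : ℕ} [NeZero N] {x : S} (hx : x ^ N = 1) (v w : Fin N → R) :
    ∑ i, (circulant v *ᵥ w) i • x ^ i.val = (∑ i, v i • x ^ i.val) * ∑ i, w i • x ^ i.val :=
  calc ∑ i, (circulant v *ᵥ w) i • x ^ i.val
      = ∑ j, ∑ i, (v (i - j) * w j) • x ^ i.val := by
        simp only [mulVec, dotProduct, circulant_apply, Finset.sum_smul]
        exact Finset.sum_comm
    _ = ∑ j, ∑ k, (v k * w j) • x ^ (k + j).val := by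
        refine Finset.sum_congr rfl fun j _ => ?_
        rw [← Equiv.sum_comp (Equiv.addRight j)]
        simp only [Equiv.coe_addRight, add_sub_cancel_right]
    _ = ∑ j, ∑ k, (v k • x ^ k.val) * (w j • x ^ j.val) := by
        simp only [pow_val_add_of_pow_eq_one hx, smul_mul_smul_comm]
    _ = (∑ i, v i • x ^ i.val) * ∑ i, w i • x ^ i.val := by
        rw [Finset.sum_comm, ← Finset.sum_mul_sum]

section CyclicRing

variable (R : Type*) [CommRing R] (N : ℕ)

theorem root_X_pow_sub_one_pow_eq_one : AdjoinRoot.root (X ^ N - 1 : R[X]) ^ N = 1 := by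
  rw [← AdjoinRoot.mk_X, ← map_pow, ← map_one (AdjoinRoot.mk _), AdjoinRoot.mk_eq_mk]

theorem monic_X_pow_sub_one [NeZero N] : (X ^ N - 1 : R[X]).Monic := by
  simpa using monic_X_pow_sub_C (1 : R) (NeZero.ne N)

variable [Nontrivial R]

theorem natDegree_X_pow_sub_one : (X ^ N - 1 : R[X]).natDegree = N := by
  simpa using natDegree_X_pow_sub_C (R := R) (n := N) (r := 1)

variable [NeZero N]

/-- The linear identification of coefficient vectors of length `N` with the cyclic ring
`R[X] / (X ^ N - 1)`, sending `v` to the class of `∑ i, vᵢ Xⁱ`. -/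
noncomputable def cyclicEquiv : (Fin N → R) ≃ₗ[R] AdjoinRoot (X ^ N - 1 : R[X]) :=
  ((AdjoinRoot.powerBasis' (monic_X_pow_sub_one R N)).basis.reindex
    (finCongr (natDegree_X_pow_sub_one R N))).equivFun.symm

variable {R N}

theorem cyclicEquiv_apply (v : Fin N → R) :
    cyclicEquiv R N v = ∑ i, v i • AdjoinRoot.root (X ^ N - 1 : R[X]) ^ i.val := by
  simp only [cyclicEquiv, Module.Basis.equivFun_symm_apply, Module.Basis.coe_reindex,
    PowerBasis.coe_basis, AdjoinRoot.powerBasis'_gen, Function.comp_apply]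
  rfl

theorem cyclicEquiv_eq_mk_ofFn [DecidableEq R] (v : Fin N → R) :
    cyclicEquiv R N v = AdjoinRoot.mk (X ^ N - 1) (ofFn N v) := by
  simp [cyclicEquiv_apply, ofFn_eq_sum_monomial, ← C_mul_X_pow_eq_monomial, Algebra.smul_def]

theorem cyclicEquiv_circulant_mulVec (v w : Fin N → R) :
    cyclicEquiv R N (circulant v *ᵥ w) = cyclicEquiv R N v * cyclicEquiv R N w := by
  simp only [cyclicEquiv_apply,
    sum_circulant_mulVec_smul_pow (root_X_pow_sub_one_pow_eq_one R N)]

theorem map_cyclicEquiv_range_circulant (v : Fin N → R) :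
    (circulant v).mulVecLin.range.map (cyclicEquiv R N).toLinearMap =
      (Ideal.span {cyclicEquiv R N v}).restrictScalars R := by
  ext x
  simp only [Submodule.mem_map, LinearMap.mem_range, exists_exists_eq_and, mulVecLin_apply,
    LinearEquiv.coe_coe, cyclicEquiv_circulant_mulVec, Submodule.restrictScalars_mem,
    Ideal.mem_span_singleton', (cyclicEquiv R N).surjective.exists, mul_comm]

theorem map_cyclicEquiv_range_fromCols_circulant (v w : Fin N → R) :
    (fromCols (circulant v) (circulant w)).mulVecLin.range.map (cyclicEquiv R N).toLinearMap =
      (Ideal.span {cyclicEquiv R N v, cyclicEquiv R N w}).restrictScalars R := by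
  rw [range_mulVecLin_fromCols, Submodule.map_sup, map_cyclicEquiv_range_circulant,
    map_cyclicEquiv_range_circulant, ← Submodule.restrictScalars_sup, Ideal.span_insert]

theorem rank_fromCols_circulant_eq_finrank_span (v w : Fin N → R) :
    (fromCols (circulant v) (circulant w)).rank =
      Module.finrank R (Ideal.span {cyclicEquiv R N v, cyclicEquiv R N w}) := by
  rw [Matrix.rank, ← (cyclicEquiv R N).finrank_map_eq, map_cyclicEquiv_range_fromCols_circulant]
  rfl

end CyclicRing

section Field

variable {K : Type*} [Field K]

theorem finrank_quotient_span_mk [GCDMonoid K[X]] (f p : K[X]) :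
    Module.finrank K (AdjoinRoot f ⧸ Ideal.span {AdjoinRoot.mk f p}) = (gcd p f).natDegree := by
  have span_mk : Ideal.span {AdjoinRoot.mk f p} = (Ideal.span {p}).map (AdjoinRoot.mk f) := by
    rw [Ideal.map_span, Set.image_singleton]
  have span_sup : Ideal.span {f} ⊔ Ideal.span {p} = Ideal.span {gcd p f} := by
    rw [span_gcd, Ideal.span_insert, sup_comm]
  rw [span_mk, ← finrank_quotient_span_eq_natDegree, ← span_sup]
  exact (DoubleQuot.quotQuotEquivQuotSupₐ K _ _).toLinearEquiv.finrank_eq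

theorem finrank_span_mk [GCDMonoid K[X]] {f : K[X]} (hf : f ≠ 0) (p : K[X]) :
    Module.finrank K (Ideal.span {AdjoinRoot.mk f p}) = f.natDegree - (gcd p f).natDegree := by
  have := (AdjoinRoot.powerBasis hf).finite
  have rank_nullity : Module.finrank K (AdjoinRoot f ⧸ Ideal.span {AdjoinRoot.mk f p}) +
      Module.finrank K (Ideal.span {AdjoinRoot.mk f p}) = f.natDegree :=
    (((Ideal.span {AdjoinRoot.mk f p}).restrictScalars K).finrank_quotient_add_finrank).trans
      finrank_quotient_span_eq_natDegree
  rw [← finrank_quotient_span_mk, ← rank_nullity, Nat.add_sub_cancel_left]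

theorem span_mk_pair_eq_span_mk_gcd [GCDMonoid K[X]] (f p q : K[X]) :
    Ideal.span {AdjoinRoot.mk f p, AdjoinRoot.mk f q} =
      Ideal.span {AdjoinRoot.mk f (gcd p q)} := by
  rw [← Set.image_pair, ← Ideal.map_span, ← span_gcd, Ideal.map_span, Set.image_singleton]

theorem rank_fromCols_circulant_general [DecidableEq K] {N : ℕ} [NeZero N] (v w : Fin N → K) :
    (fromCols (circulant v) (circulant w)).rank =
      N - (gcd (gcd (ofFn N v) (ofFn N w)) (X ^ N - 1)).natDegree := by
  rw [rank_fromCols_circulant_eq_finrank_span, cyclicEquiv_eq_mk_ofFn,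
    cyclicEquiv_eq_mk_ofFn, span_mk_pair_eq_span_mk_gcd,
    finrank_span_mk (monic_X_pow_sub_one K N).ne_zero, natDegree_X_pow_sub_one]

end Field

theorem polyOfVec_eq_ofFn {N : ℕ} (v : Fin N → ZMod 2) : polyOfVec v = ofFn N v := by
  simp only [polyOfVec, ofFn_eq_sum_monomial, C_mul_X_pow_eq_monomial]

/-- For a coprime BB code with `H_X = [A B]`, `A = circulant va`,
`B = circulant vb`, and `g = gcd(gcd(a,b), X^N - 1)`, one has
`rank H_X = N - deg g`. -/
theorem rank_fromCols_circulant (N : ℕ) (hN : 1 ≤ N) (va vb : Fin N → ZMod 2)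
    (a b : Polynomial (ZMod 2)) (ha : a = polyOfVec va) (hb : b = polyOfVec vb)
    (g : Polynomial (ZMod 2)) (hg : g = gcd (gcd a b) (Polynomial.X ^ N - 1)) :
    (Matrix.fromCols (Matrix.circulant va) (Matrix.circulant vb)).rank =
      N - g.natDegree := by
  have : NeZero N := ⟨by omega⟩
  rw [hg, ha, hb, polyOfVec_eq_ofFn, polyOfVec_eq_ofFn, rank_fromCols_circulant_general]
end

section
/- Let N ≥ 1 and let g be a polynomial over F₂ = ZMod 2 that divides X^N − 1. Then the principal ideal generated by the image ḡ of g in the quotient ring R = (ZMod 2)[X]/(X^N − 1), viewed as an F₂-vector subspace of R, has dimension N − deg g. -/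
set_option synthInstance.maxHeartbeats 1000000

open Polynomial

theorem finrank_quotient_add_finrank_map_mk {R A : Type*} [CommRing R] [IsDomain R] [CommRing A]
    [Algebra R A] {I J : Ideal A} [Module.Finite R (A ⧸ I)] (hIJ : I ≤ J) :
    Module.finrank R (A ⧸ J) +
        Module.finrank R ((J.map (Ideal.Quotient.mk I)).restrictScalars R) =
      Module.finrank R (A ⧸ I) := by
  let thirdIso : ((A ⧸ I) ⧸ (J.map (Ideal.Quotient.mk I)).restrictScalars R) ≃ₗ[R] A ⧸ J :=
    (Submodule.Quotient.restrictScalarsEquiv R _).trans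
      (DoubleQuot.quotQuotEquivQuotOfLEₐ R hIJ).toLinearEquiv
  rw [← thirdIso.finrank_eq, Submodule.finrank_quotient_add_finrank]

theorem finite_polynomial_quotient_span_singleton {K : Type*} [Field K] {f : K[X]} (hf : f ≠ 0) :
    Module.Finite K (K[X] ⧸ Ideal.span {f}) :=
  (AdjoinRoot.powerBasis hf).finite

theorem finrank_span_image_divisor_general {K : Type*} [Field K] {f g : K[X]} (hf : f ≠ 0)
    (hdvd : g ∣ f) :
    Module.finrank K
      ((Ideal.span {Ideal.Quotient.mk (Ideal.span {f}) g}).restrictScalars K) =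
      f.natDegree - g.natDegree := by
  have := finite_polynomial_quotient_span_singleton hf
  have hle : Ideal.span {f} ≤ Ideal.span {g} := Ideal.span_singleton_le_span_singleton.mpr hdvd
  have hadd := finrank_quotient_add_finrank_map_mk (R := K) hle
  rw [Ideal.map_span, Set.image_singleton, finrank_quotient_span_eq_natDegree,
    finrank_quotient_span_eq_natDegree] at hadd
  exact Nat.eq_sub_of_add_eq' hadd

/-- If `g ∣ X^N - 1` over `F₂`, the principal ideal generated by the image
of `g` in `(ZMod 2)[X]/(X^N - 1)`, viewed as an `F₂`-subspace, has dimension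
`N - deg g`. -/
theorem finrank_span_image_divisor (N : ℕ) (hN : 1 ≤ N) (g : Polynomial (ZMod 2))
    (hdvd : g ∣ Polynomial.X ^ N - 1)
    (I : Ideal (Polynomial (ZMod 2)))
    (hI : I = Ideal.span {Polynomial.X ^ N - 1}) :
    Module.finrank (ZMod 2)
      ((Ideal.span {Ideal.Quotient.mk I g}).restrictScalars (ZMod 2)) =
      N - g.natDegree := by
  subst hI
  rw [← C_1] at hdvd ⊢
  rw [finrank_span_image_divisor_general (X_pow_sub_C_ne_zero hN 1) hdvd, natDegree_X_pow_sub_C]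
end

section
/- Let N ≥ 1, let g be a polynomial over F₂ = ZMod 2 dividing X^N − 1, and let h = (X^N − 1)/g be the check polynomial, so that g·h = X^N − 1. In the quotient ring R = (ZMod 2)[X]/(X^N − 1), the annihilator of the principal ideal generated by ḡ equals the principal ideal generated by h̄, i.e. { u ∈ R : u·ḡ = 0 } = Ideal.span {h̄}; moreover this annihilator, as an F₂-subspace of R, has dimension deg g. -/
set_option synthInstance.maxHeartbeats 1000000

open Polynomial

/-!
Cancelling `g` shows that `gh` divides `ug` exactly when `h` divides `u`, so the annihilator of `ḡ`
is `(h̄)`. Cancelling `h` shows that multiplication by `h` identifies `K[X] ⧸ (g)`, which has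
dimension `deg g`, with `(h̄)`.
-/

open scoped nonZeroDivisors

section QuotientBySpanMul

variable {A : Type*} [CommRing A] {a b : A}

theorem restrictScalars_ideal_span_quotient (I : Ideal A) (s : Set (A ⧸ I)) :
    (Ideal.span s).restrictScalars A = Submodule.span A s :=
  Submodule.restrictScalars_span A (A ⧸ I) Ideal.Quotient.mk_surjective s

theorem mul_mk_span_mul_eq_zero_iff (ha : a ∈ A⁰) (u : A ⧸ Ideal.span {a * b}) :
    u * Ideal.Quotient.mk (Ideal.span {a * b}) a = 0 ↔
      u ∈ Ideal.span {Ideal.Quotient.mk (Ideal.span {a * b}) b} := by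
  rw [← Submodule.restrictScalars_mem A, restrictScalars_ideal_span_quotient,
    ← Ideal.Quotient.torsionBy_eq_span_singleton a b ha, Submodule.mem_torsionBy_iff,
    Algebra.smul_def, mul_comm u, Ideal.Quotient.algebraMap_eq]

theorem torsionOf_mk_span_mul (hb : b ∈ A⁰) :
    Ideal.torsionOf A (A ⧸ Ideal.span {a * b}) (Ideal.Quotient.mk (Ideal.span {a * b}) b) =
      Ideal.span {a} := by
  ext x
  rw [Ideal.mem_torsionOf_iff, Algebra.smul_def, Ideal.Quotient.algebraMap_eq, ← map_mul,
    Ideal.Quotient.eq_zero_iff_dvd, Ideal.mem_span_singleton]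
  refine ⟨?_, fun hax => mul_dvd_mul_right hax b⟩
  rintro ⟨c, hc⟩
  exact ⟨c, (mul_cancel_right_mem_nonZeroDivisors hb).1 (by rw [hc, mul_right_comm])⟩

/-- Multiplication by a non-zero-divisor `b`, as an isomorphism from `A ⧸ (a)` onto the ideal
generated by the class of `b` in `A ⧸ (ab)`. -/
noncomputable def quotientSpanEquivSpanMk (hb : b ∈ A⁰) :
    (A ⧸ Ideal.span {a}) ≃ₗ[A]
      (Ideal.span {Ideal.Quotient.mk (Ideal.span {a * b}) b}).restrictScalars A :=
  Submodule.quotEquivOfEq _ _ (torsionOf_mk_span_mul hb).symm ≪≫ₗ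
    Ideal.quotTorsionOfEquivSpanSingleton A _ _ ≪≫ₗ
    LinearEquiv.ofEq _ _ (restrictScalars_ideal_span_quotient _ _).symm

theorem finrank_span_mk_span_mul (R : Type*) [CommSemiring R] [Algebra R A] (hb : b ∈ A⁰) :
    Module.finrank R
      ((Ideal.span {Ideal.Quotient.mk (Ideal.span {a * b}) b}).restrictScalars R) =
      Module.finrank R (A ⧸ Ideal.span {a}) :=
  ((quotientSpanEquivSpanMk hb).restrictScalars R).finrank_eq.symm

end QuotientBySpanMul

theorem annihilator_span_eq_span_check_general {K : Type*} [Field K] {g h : K[X]}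
    (hgh : g * h ≠ 0) :
    {u : K[X] ⧸ Ideal.span {g * h} | u * Ideal.Quotient.mk (Ideal.span {g * h}) g = 0} =
      (Ideal.span {Ideal.Quotient.mk (Ideal.span {g * h}) h} :
        Set (K[X] ⧸ Ideal.span {g * h})) ∧
    Module.finrank K
      ((Ideal.span {Ideal.Quotient.mk (Ideal.span {g * h}) h}).restrictScalars K) =
      g.natDegree := by
  have hg : g ∈ K[X]⁰ := mem_nonZeroDivisors_of_ne_zero (left_ne_zero_of_mul hgh)
  have hh : h ∈ K[X]⁰ := mem_nonZeroDivisors_of_ne_zero (right_ne_zero_of_mul hgh)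
  exact ⟨Set.ext (mul_mk_span_mul_eq_zero_iff hg),
    (finrank_span_mk_span_mul K hh).trans finrank_quotient_span_eq_natDegree⟩

/-- If `g·h = X^N - 1` over `F₂`, then in `(ZMod 2)[X]/(X^N - 1)` the
annihilator of the principal ideal generated by `ḡ`, i.e. `{u : u·ḡ = 0}`, equals the
principal ideal generated by `h̄`, and has `F₂`-dimension `deg g`. -/
theorem annihilator_span_eq_span_check (N : ℕ) (hN : 1 ≤ N)
    (g h : Polynomial (ZMod 2)) (hgh : g * h = Polynomial.X ^ N - 1)
    (I : Ideal (Polynomial (ZMod 2)))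
    (hI : I = Ideal.span {Polynomial.X ^ N - 1}) :
    {u : Polynomial (ZMod 2) ⧸ I | u * Ideal.Quotient.mk I g = 0} =
      (Ideal.span {Ideal.Quotient.mk I h} : Set (Polynomial (ZMod 2) ⧸ I)) ∧
    Module.finrank (ZMod 2)
      ((Ideal.span {Ideal.Quotient.mk I h}).restrictScalars (ZMod 2)) =
      g.natDegree := by
  obtain rfl : I = Ideal.span {g * h} := hgh ▸ hI
  exact annihilator_span_eq_span_check_general (hgh ▸ X_pow_sub_C_ne_zero hN 1)
end

section
/- Let N ≥ 1, let a, b be polynomials over F₂ = ZMod 2 of degree < N with coefficient vectors va, vb ∈ (ZMod 2)^N, let A = circulant va, B = circulant vb, H_X = [A B], H_Z = [Bᵀ Aᵀ], and let g = gcd(gcd(a,b), X^N − 1) with deg g ≥ 1. Setting n := 2N, k := 2N − rank H_X − rank H_Z, and r_X := N − rank H_X, the fraction of redundant stabilizers equals the quantum rate: r_X · n = k · N (i.e. r_X/N = k/n as rationals). -/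
open Matrix Polynomial

/-!
Negating the index group turns a circulant matrix into its transpose. Hence negating all indices
and swapping the two column blocks turns `[A B]` into `[Bᵀ Aᵀ]`, so that both check matrices have
the same rank and `k = 2 r_X`.
-/

section FromCols

variable {l m n₁ n₂ n₃ n₄ α R : Type*}

theorem fromCols_submatrix_sumMap (A : Matrix m n₁ α) (B : Matrix m n₂ α)
    (e : l → m) (f : n₃ → n₁) (g : n₄ → n₂) :
    (fromCols A B).submatrix e (Sum.map f g) = fromCols (A.submatrix e f) (B.submatrix e g) := by
  ext i (j | j) <;> rfl

theorem fromCols_submatrix_sumSwap (A : Matrix m n₁ α) (B : Matrix m n₂ α) :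
    (fromCols A B).submatrix id Sum.swap = fromCols B A := by
  ext i (j | j) <;> rfl

variable [CommSemiring R] [Fintype n₁] [Fintype n₂]

theorem rank_fromCols_comm (A : Matrix m n₁ R) (B : Matrix m n₂ R) :
    (fromCols A B).rank = (fromCols B A).rank := by
  rw [← fromCols_submatrix_sumSwap A B]
  exact (rank_submatrix _ (Equiv.refl m) (Equiv.sumComm n₂ n₁)).symm

theorem rank_fromCols_submatrix [Fintype n₃] [Fintype n₄] (A : Matrix m n₁ R) (B : Matrix m n₂ R)
    (e : l ≃ m) (f : n₃ ≃ n₁) (g : n₄ ≃ n₂) :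
    (fromCols (A.submatrix e f) (B.submatrix e g)).rank = (fromCols A B).rank := by
  rw [← fromCols_submatrix_sumMap]
  exact rank_submatrix _ e (Equiv.sumCongr f g)

end FromCols

section Circulant

variable {G α R : Type*}

theorem circulant_submatrix_neg [SubtractionCommMonoid G] (v : G → α) :
    (circulant v).submatrix (Equiv.neg G) (Equiv.neg G) = (circulant v)ᵀ := by
  ext i j
  exact congrArg v (neg_sub_neg i j)

theorem rank_fromCols_transpose_circulant [SubtractionCommMonoid G] [Fintype G] [CommSemiring R]
    (v w : G → R) :
    (fromCols (circulant w)ᵀ (circulant v)ᵀ).rank =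
      (fromCols (circulant v) (circulant w)).rank := by
  rw [← circulant_submatrix_neg, ← circulant_submatrix_neg, rank_fromCols_submatrix,
    rank_fromCols_comm]

theorem bb_rate_redundancy_equality_general [AddCommGroup G] [Fintype G] [CommRing R]
    (va vb : G → R) {HX HZ : Matrix G (G ⊕ G) R}
    (hHX : HX = fromCols (circulant va) (circulant vb))
    (hHZ : HZ = fromCols (circulant vb)ᵀ (circulant va)ᵀ)
    {N n k rX : ℕ} (hN : N = Fintype.card G) (hn : n = 2 * N)
    (hk : k = 2 * N - HX.rank - HZ.rank) (hrX : rX = N - HX.rank) :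
    rX * n = k * N ∧ (rX : ℚ) / (N : ℚ) = (k : ℚ) / (n : ℚ) := by
  have rank_eq : HZ.rank = HX.rank := by
    rw [hHX, hHZ, rank_fromCols_transpose_circulant]
  have k_eq : k = 2 * rX := by omega
  subst hN hn k_eq
  refine ⟨by ring, ?_⟩
  push_cast
  exact (mul_div_mul_left _ _ two_ne_zero).symm

end Circulant

/-- For a coprime BB code with `n = 2N`, `k = 2N - rank H_X - rank H_Z`
and `r_X = N - rank H_X`, the redundancy density equals the quantum rate:
`r_X · n = k · N`, i.e. `r_X / N = k / n` as rationals. -/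
theorem bb_rate_redundancy_equality (N : ℕ) (hN : 1 ≤ N) (va vb : Fin N → ZMod 2)
    (a b : Polynomial (ZMod 2)) (ha : a = polyOfVec va) (hb : b = polyOfVec vb)
    (g : Polynomial (ZMod 2)) (hg : g = gcd (gcd a b) (Polynomial.X ^ N - 1))
    (hdeg : 1 ≤ g.natDegree)
    (HX HZ : Matrix (Fin N) (Fin N ⊕ Fin N) (ZMod 2))
    (hHX : HX = Matrix.fromCols (Matrix.circulant va) (Matrix.circulant vb))
    (hHZ : HZ = Matrix.fromCols (Matrix.circulant vb)ᵀ (Matrix.circulant va)ᵀ)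
    (n k rX : ℕ) (hn : n = 2 * N)
    (hk : k = 2 * N - HX.rank - HZ.rank) (hrX : rX = N - HX.rank) :
    rX * n = k * N ∧ (rX : ℚ) / (N : ℚ) = (k : ℚ) / (n : ℚ) := by
  have : NeZero N := NeZero.of_pos hN
  exact bb_rate_redundancy_equality_general va vb hHX hHZ (Fintype.card_fin N).symm hn hk hrX
end

section
/- (BCH bound.) Let F be a field of characteristic 2, let α ∈ F be a primitive N-th root of unity (i.e. α has multiplicative order N), and let c be a nonzero polynomial over F₂ = ZMod 2 with deg c < N. Suppose there exist integers b ≥ 0 and δ ≥ 2 such that c(α^{b+i}) = 0 for all i = 0, 1, …, δ−2, where c is evaluated in F via the canonical ring map ZMod 2 → F. Then the Hamming weight of c (the number of nonzero coefficients of c, i.e. c.support.card) is at least δ. -/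
open Polynomial

/-!
Evaluating `p` at `β * α ^ i` gives `∑ j, (p_j * β ^ j) * (α ^ j) ^ i`, a sum over the support of
`p`. If there are at least as many roots of this form, for consecutive `i` from `0`, as nonzero
coefficients, then the vector of the `p_j * β ^ j` is annihilated by a square Vandermonde matrix
with distinct nodes `α ^ j`, so it is zero.
-/

theorem eq_zero_of_forall_sum_mul_pow_eq_zero {ι R : Type*} [CommRing R] [IsDomain R]
    {s : Finset ι} {v x : ι → R} (hx : Set.InjOn x s)
    (hsum : ∀ i < s.card, ∑ j ∈ s, v j * x j ^ i = 0) {j : ι} (hj : j ∈ s) : v j = 0 := by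
  let e : Fin s.card ≃ s := s.equivFin.symm
  have hxe : Function.Injective fun k ↦ x (e k) := hx.injective.comp e.injective
  have hve : (fun k ↦ v (e k)) = 0 := by
    refine Matrix.eq_zero_of_forall_pow_sum_mul_pow_eq_zero hxe fun i ↦ ?_
    rw [e.sum_comp fun k : s ↦ v k * x k ^ (i : ℕ),
      Finset.sum_coe_sort s fun k ↦ v k * x k ^ (i : ℕ)]
    exact hsum i i.isLt
  simpa only [e.apply_symm_apply, Pi.zero_apply] using congrFun hve (e.symm ⟨j, hj⟩)

theorem eval₂_mul_pow_eq_sum_support {R S : Type*} [Semiring R] [CommSemiring S] (φ : R →+* S)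
    (p : R[X]) (α β : S) (i : ℕ) :
    p.eval₂ φ (β * α ^ i) = ∑ j ∈ p.support, φ (p.coeff j) * β ^ j * (α ^ j) ^ i := by
  rw [eval₂_eq_sum, Polynomial.sum]
  refine Finset.sum_congr rfl fun j _ ↦ ?_
  rw [mul_pow, pow_right_comm, mul_assoc]

theorem injOn_pow_support_of_natDegree_lt_orderOf {R M : Type*} [Semiring R] [Monoid M]
    {p : R[X]} {α : M} (hdeg : p.natDegree < orderOf α) :
    Set.InjOn (fun j : ℕ ↦ α ^ j) p.support :=
  pow_injOn_Iio_orderOf.mono fun _ hj ↦ (le_natDegree_of_mem_supp _ hj).trans_lt hdeg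

theorem bch_bound_general {R S : Type*} [Semiring R] [CommRing S] [IsDomain S] {φ : R →+* S}
    (hφ : Function.Injective φ) {p : R[X]} (hp : p ≠ 0) {α β : S} (hβ : β ≠ 0)
    (hα : Set.InjOn (fun j : ℕ ↦ α ^ j) p.support) {δ : ℕ}
    (hroots : ∀ i, i + 1 < δ → p.eval₂ φ (β * α ^ i) = 0) :
    δ ≤ p.support.card := by
  by_contra! hlt
  obtain ⟨j, hj⟩ := support_nonempty.mpr hp
  have hzero : φ (p.coeff j) * β ^ j = 0 := by
    refine eq_zero_of_forall_sum_mul_pow_eq_zero (v := fun k ↦ φ (p.coeff k) * β ^ k) hα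
      (fun i hi ↦ ?_) hj
    rw [← eval₂_mul_pow_eq_sum_support]
    exact hroots i (by lia)
  have hcoeff : φ (p.coeff j) ≠ 0 := (map_ne_zero_iff φ hφ).mpr (mem_support_iff.mp hj)
  exact mul_ne_zero hcoeff (pow_ne_zero j hβ) hzero

/-- BCH bound: If `α ∈ F` (char 2) has multiplicative order `N`, and the
nonzero polynomial `c` over `F₂` of degree `< N` vanishes (in `F`, via the canonical map
`ZMod 2 → F`) at `δ - 1` consecutive powers `α^b, …, α^{b+δ-2}`, then the Hamming
weight of `c` is at least `δ`. -/
theorem bch_bound (F : Type*) [Field F] [CharP F 2] (N : ℕ) (α : F)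
    (hα : orderOf α = N)
    (c : Polynomial (ZMod 2)) (hc0 : c ≠ 0) (hcdeg : c.natDegree < N)
    (b δ : ℕ) (hδ : 2 ≤ δ)
    (hroots : ∀ i ≤ δ - 2,
      Polynomial.eval₂ (ZMod.castHom (dvd_refl 2) F) (α ^ (b + i)) c = 0) :
    δ ≤ c.support.card := by
  subst hα
  have hα0 : α ≠ 0 := (orderOf_pos_iff.mp (Nat.zero_lt_of_lt hcdeg)).isUnit.ne_zero
  exact bch_bound_general (RingHom.injective _) hc0 (pow_ne_zero b hα0)
    (injOn_pow_support_of_natDegree_lt_orderOf hcdeg)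
    fun i hi ↦ by simpa only [pow_add] using hroots i (by lia)
end

section
/- (The X-syndrome code of a coprime BB code is the cyclic code generated by g.) Let N ≥ 1, let a, b be polynomials over F₂ = ZMod 2 of degree < N with coefficient vectors va, vb ∈ (ZMod 2)^N, let A = circulant va, B = circulant vb, H_X = [A B], and let g = gcd(gcd(a,b), X^N − 1). Let φ : (ZMod 2)^N → (ZMod 2)[X]/(X^N − 1) be the linear map sending a vector u to the residue class of Σᵢ uᵢ Xⁱ. Then a syndrome vector s ∈ (ZMod 2)^N lies in the column space of H_X (i.e. s = H_X·e for some e ∈ (ZMod 2)^{2N}) if and only if φ(s) lies in the principal ideal of (ZMod 2)[X]/(X^N − 1) generated by the image ḡ of g. -/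
open Matrix Polynomial

/-- The residue class in `(ZMod 2)[X]/(X^N - 1)` of the polynomial `∑ i, uᵢ Xⁱ`
associated with a coefficient vector `u ∈ (ZMod 2)^N`. -/
noncomputable def phi (N : ℕ) (u : Fin N → ZMod 2) :
    Polynomial (ZMod 2) ⧸ Ideal.span {(Polynomial.X ^ N - 1 : Polynomial (ZMod 2))} :=
  Ideal.Quotient.mk _ (polyOfVec u)

/-! Writing `x` for the class of `X` in `R[X] ⧸ (X ^ N - 1)`, the relation `x ^ N = 1` turns
addition of indices modulo `N` into multiplication of powers of `x`, so multiplying a vector by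
`circulant v` is multiplying its residue class by that of `v`. As vectors of length `N` correspond
bijectively to residue classes, the column space of `[circulant v, circulant w]` is the ideal
generated by the classes of `v` and `w`. By Bézout that ideal is generated by the class of the gcd,
and `X ^ N - 1` may be adjoined to the gcd since its class is zero. -/

section QuotientIdeals

variable {A : Type*} [CommRing A]

theorem map_quotientMk_span_singleton_sup (I : Ideal A) (m : A) :
    (I ⊔ Ideal.span {m}).map (Ideal.Quotient.mk (Ideal.span {m})) =
      I.map (Ideal.Quotient.mk (Ideal.span {m})) := by
  rw [Ideal.map_sup, Ideal.map_quotient_self, sup_bot_eq]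

theorem span_pair_quotientMk_eq_span_gcd [IsDomain A] [IsBezout A] [GCDMonoid A] (a b m : A) :
    Ideal.span {Ideal.Quotient.mk (Ideal.span {m}) a, Ideal.Quotient.mk (Ideal.span {m}) b} =
      Ideal.span {Ideal.Quotient.mk (Ideal.span {m}) (gcd (gcd a b) m)} := by
  calc Ideal.span {Ideal.Quotient.mk (Ideal.span {m}) a, Ideal.Quotient.mk (Ideal.span {m}) b}
      = (Ideal.span {gcd a b}).map (Ideal.Quotient.mk (Ideal.span {m})) := by
        rw [span_gcd, Ideal.map_span, Set.image_pair]
    _ = (Ideal.span {gcd (gcd a b) m}).map (Ideal.Quotient.mk (Ideal.span {m})) := by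
        rw [span_gcd (gcd a b) m, Ideal.span_insert, map_quotientMk_span_singleton_sup]
    _ = Ideal.span {Ideal.Quotient.mk (Ideal.span {m}) (gcd (gcd a b) m)} := by
        rw [Ideal.map_span, Set.image_singleton]

end QuotientIdeals

theorem pow_fin_val_add {M : Type*} [Monoid M] {N : ℕ} {x : M} (hx : x ^ N = 1) (i j : Fin N) :
    x ^ ((i + j : Fin N) : ℕ) = x ^ (i : ℕ) * x ^ (j : ℕ) := by
  rw [Fin.val_add, ← pow_eq_pow_mod _ hx, pow_add]

section Evaluation

variable {R S : Type*} [CommSemiring R] [DecidableEq R] [Semiring S] [Algebra R S] {N : ℕ}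

theorem aeval_ofFn (x : S) (v : Fin N → R) :
    aeval x (ofFn N v) = ∑ i, v i • x ^ (i : ℕ) := by
  simp only [ofFn_eq_sum_monomial, map_sum, aeval_monomial, Algebra.smul_def]

theorem aeval_ofFn_circulant_mulVec [NeZero N] {x : S} (hx : x ^ N = 1) (v e : Fin N → R) :
    aeval x (ofFn N (circulant v *ᵥ e)) = aeval x (ofFn N v) * aeval x (ofFn N e) := by
  simp only [aeval_ofFn]
  calc ∑ i, (circulant v *ᵥ e) i • x ^ (i : ℕ)
      = ∑ j, ∑ i, (v (i - j) * e j) • x ^ (i : ℕ) := by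
        simp only [mulVec, dotProduct, circulant_apply, Finset.sum_smul]
        exact Finset.sum_comm
    _ = ∑ j, ∑ k, (v k * e j) • x ^ ((k + j : Fin N) : ℕ) := by
        refine Finset.sum_congr rfl fun j _ => ?_
        rw [← Equiv.sum_comp (Equiv.addRight j)]
        simp only [Equiv.coe_addRight, add_sub_cancel_right]
    _ = ∑ k, ∑ j, (v k • x ^ (k : ℕ)) * (e j • x ^ (j : ℕ)) := by
        rw [Finset.sum_comm]
        simp only [pow_fin_val_add hx, smul_mul_smul_comm]
    _ = (∑ k, v k • x ^ (k : ℕ)) * ∑ j, e j • x ^ (j : ℕ) := (Finset.sum_mul_sum _ _ _ _).symm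

end Evaluation

section CyclicResidue

variable {R : Type*} [CommRing R] [DecidableEq R]

theorem bijective_quotientMk_ofFn {f : R[X]} (hf : f.Monic) {n : ℕ} (hn : f.natDegree = n) :
    Function.Bijective fun v : Fin n → R => Ideal.Quotient.mk (Ideal.span {f}) (ofFn n v) := by
  subst hn
  simp only [ofFn_eq_sum_monomial]
  exact (AdjoinRoot.powerBasisAux' hf).equivFun.symm.bijective

variable (N : ℕ)

/-- The residue class of `∑ i, v i * X ^ i` modulo `X ^ N - 1`: the identification of words of
length `N` with elements of the ring whose ideals are the cyclic codes. It is `phi` over an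
arbitrary commutative ring. -/
noncomputable def cyclicResidue : (Fin N → R) →ₗ[R] R[X] ⧸ Ideal.span {(X ^ N - 1 : R[X])} :=
  (Ideal.Quotient.mkₐ R _).toLinearMap ∘ₗ ofFn N

theorem cyclicResidue_apply (v : Fin N → R) :
    cyclicResidue N v = Ideal.Quotient.mk _ (ofFn N v) :=
  rfl

theorem cyclicResidue_eq_aeval (v : Fin N → R) :
    cyclicResidue N v =
      aeval (Ideal.Quotient.mk (Ideal.span {(X ^ N - 1 : R[X])}) X) (ofFn N v) :=
  (AdjoinRoot.aeval_eq (ofFn N v)).symm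

theorem cyclicResidue_bijective [NeZero N] :
    Function.Bijective (cyclicResidue (R := R) N) := by
  obtain _ | _ := subsingleton_or_nontrivial R
  · have : Subsingleton (R[X] ⧸ Ideal.span {(X ^ N - 1 : R[X])}) :=
      Ideal.Quotient.mk_surjective.subsingleton
    exact ⟨Function.injective_of_subsingleton _, Function.surjective_to_subsingleton _⟩
  have hmonic : (X ^ N - 1 : R[X]).Monic := leadingCoeff_X_pow_sub_one (NeZero.pos N)
  have hdegree : (X ^ N - 1 : R[X]).natDegree = N := natDegree_X_pow_sub_C (r := 1)
  exact bijective_quotientMk_ofFn hmonic hdegree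

variable {N} [NeZero N]

theorem cyclicResidue_circulant_mulVec (v e : Fin N → R) :
    cyclicResidue N (circulant v *ᵥ e) = cyclicResidue N v * cyclicResidue N e := by
  have hX : Ideal.Quotient.mk (Ideal.span {(X ^ N - 1 : R[X])}) X ^ N = 1 :=
    Ideal.Quotient.eq.mpr (Ideal.mem_span_singleton_self _)
  simp only [cyclicResidue_eq_aeval, aeval_ofFn_circulant_mulVec hX]

theorem cyclicResidue_fromCols_circulant_mulVec (v w : Fin N → R) (e : Fin N ⊕ Fin N → R) :
    cyclicResidue N (fromCols (circulant v) (circulant w) *ᵥ e) =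
      cyclicResidue N (e ∘ Sum.inl) * cyclicResidue N v +
        cyclicResidue N (e ∘ Sum.inr) * cyclicResidue N w := by
  rw [fromCols_mulVec, map_add, cyclicResidue_circulant_mulVec, cyclicResidue_circulant_mulVec,
    mul_comm (cyclicResidue N v), mul_comm (cyclicResidue N w)]

theorem exists_fromCols_circulant_mulVec_eq_iff (v w s : Fin N → R) :
    (∃ e, fromCols (circulant v) (circulant w) *ᵥ e = s) ↔
      cyclicResidue N s ∈ Ideal.span {cyclicResidue N v, cyclicResidue N w} := by
  rw [Ideal.mem_span_pair]
  constructor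
  · rintro ⟨e, rfl⟩
    exact ⟨_, _, (cyclicResidue_fromCols_circulant_mulVec v w e).symm⟩
  · rintro ⟨p, q, hpq⟩
    obtain ⟨e₁, rfl⟩ := (cyclicResidue_bijective N).surjective p
    obtain ⟨e₂, rfl⟩ := (cyclicResidue_bijective N).surjective q
    refine ⟨Sum.elim e₁ e₂, (cyclicResidue_bijective N).injective ?_⟩
    rw [cyclicResidue_fromCols_circulant_mulVec, Sum.elim_comp_inl, Sum.elim_comp_inr, hpq]

end CyclicResidue

theorem bb_syndrome_code_eq_cyclic_general {K : Type*} [Field K] [DecidableEq K] [GCDMonoid K[X]]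
    {N : ℕ} [NeZero N] (va vb s : Fin N → K) :
    (∃ e, fromCols (circulant va) (circulant vb) *ᵥ e = s) ↔
      cyclicResidue N s ∈ Ideal.span {Ideal.Quotient.mk (Ideal.span {(X ^ N - 1 : K[X])})
        (gcd (gcd (ofFn N va) (ofFn N vb)) (X ^ N - 1))} := by
  rw [exists_fromCols_circulant_mulVec_eq_iff, cyclicResidue_apply N va, cyclicResidue_apply N vb,
    span_pair_quotientMk_eq_span_gcd]

theorem phi_eq_cyclicResidue (N : ℕ) (u : Fin N → ZMod 2) : phi N u = cyclicResidue N u := by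
  rw [phi, polyOfVec_eq_ofFn, cyclicResidue_apply]

/-- The X-syndrome code of a coprime BB code is the cyclic code generated
by `g`: a syndrome `s` lies in the column space of `H_X = [circulant va, circulant vb]`
iff `φ(s)` lies in the principal ideal generated by the image of
`g = gcd(gcd(a,b), X^N - 1)`. -/
theorem bb_syndrome_code_eq_cyclic (N : ℕ) (hN : 1 ≤ N) (va vb : Fin N → ZMod 2)
    (a b : Polynomial (ZMod 2)) (ha : a = polyOfVec va) (hb : b = polyOfVec vb)
    (g : Polynomial (ZMod 2)) (hg : g = gcd (gcd a b) (Polynomial.X ^ N - 1))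
    (s : Fin N → ZMod 2) :
    (∃ e : Fin N ⊕ Fin N → ZMod 2,
        (Matrix.fromCols (Matrix.circulant va) (Matrix.circulant vb)).mulVec e = s) ↔
      phi N s ∈ Ideal.span
        {Ideal.Quotient.mk (Ideal.span {(Polynomial.X ^ N - 1 : Polynomial (ZMod 2))}) g} := by
  have : NeZero N := ⟨Nat.one_le_iff_ne_zero.mp hN⟩
  rw [hg, ha, hb, polyOfVec_eq_ofFn, polyOfVec_eq_ofFn, phi_eq_cyclicResidue]
  exact bb_syndrome_code_eq_cyclic_general va vb s
end
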